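/- Let ℓ ≥ 1 be an integer and suppose the Markov chain Φ is ψ-irreducible. Then the following are equivalent. (1) There exists A ∈ B+(X) such that sup_{x∈A} Σ_{n≥1} n^ℓ P^n(x,A) < ∞. (2) There exists A ∈ B+(X) such that sup_{x∈A} L(x,A) < 1 and sup_{x∈A} E_x[τ_A^ℓ 1_{τ_A<∞}] < ∞. (3) There exist A ∈ B+(X), constants d ∈ (0,∞) and b ∈ (0,1), and nonnegative functions W_0, W_1, …, W_ℓ, with W_i(x_0) < ∞ for some x_0 ∈ X, satisfying for i = 0,1,…,ℓ: PW_i(x) ≤ W_i(x) − (ℓ−i) W_{i+1}(x) for x ∈ A^c (with W_{ℓ+1} = 0); W_i(x) ≥ 1 for x ∈ A; PW_0(x) ≤ d for x ∈ A; and PW_ℓ(x) ≤ b for x ∈ A. (4) Φ is ℓ-transient. -/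

import Mathlib

/-!
Write `p_n = P^n 1_A`, `f_n(x) = P_x(τ_A = n)`, `L = ∑ f_n`; the transition operator acts on
nonnegative functions by `act P`, and everything reduces to identities for its iterates.

* (1) ⇒ (4). The weighted potential `G = ∑ n^ℓ p_n` satisfies `P^k G ≤ G`, so `{G < ∞}` is absorbing;
  it contains `A`, hence has full measure by irreducibility. The sets `{p_n ≥ 1/m, G ≤ m}` cover it
  and are uniformly `ℓ`-transient, because `P^k(x, B) ≤ m P^{k+n}(x, A)` on each of them
  (`unifAlgTransient_level`, `algTransient_of_set`). (4) ⇒ (1) is immediate.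
* (1) ⇒ (2). If `N = A ∩ {L < 1}` were null, maximality of `ψ` would give a point of `A` that never
  reaches `N` (`IsMaxIrreducibility.null_iterP`). From there every visit to `A` is followed by
  another one, which forces `L = 0` as the potential is finite (`retL_eq_zero_of_null`): a
  contradiction. So some `{x ∈ A | L(x, A) ≤ 1 - 1/(k+1)}` has positive measure, and the moments
  of its return time are dominated by the potential (`returns_of_transient`).
* (2) ⇒ (1). Decomposing at the last visit, `p_n = f_n + ∑_{0 < j < n} P^j (1_A f_{n-j})`. Splitting
  `(j + m)^ℓ ≤ a j^ℓ + c m^ℓ` with `a` so close to `1` that `a sup_A L < 1` gives an inequality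
  for the truncated potential that can be solved (`renewal_bound`, `transient_of_returns`).
* (3) ⇒ (2). Functions satisfying the drift conditions dominate the moments of `τ_A`
  (`retE_le_of_drift`, `returns_of_drift`).
* (2) ⇒ (3). `W_{ℓ-k}(x) = k! E_x[(σ_A + 1)^k 1_{σ_A < ∞}]` works (`driftU`), since
  one step of the chain turns `σ_A + 1` into `τ_A`.
-/

open MeasureTheory ProbabilityTheory
open scoped ENNReal NNReal Classical

namespace MarkovTransience

variable {X : Type*} [MeasurableSpace X]

/-- `iterP P n x A` is the `n`-step transition probability `P^n(x, A)`. -/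
noncomputable def iterP (P : Kernel X X) : ℕ → X → Set X → ℝ≥0∞
  | 0 => fun x A => A.indicator (fun _ => 1) x
  | n + 1 => fun x A => ∫⁻ y, iterP P n y A ∂(P x)

/-- `retF P A n x` is `F^n(x, A) = P_x(τ_A = n)`, the probability that the first
return to `A` happens at time `n`. -/
noncomputable def retF (P : Kernel X X) (A : Set X) : ℕ → X → ℝ≥0∞
  | 0 => fun _ => 0
  | 1 => fun x => P x A
  | n + 2 => fun x => ∫⁻ y in Aᶜ, retF P A (n + 1) y ∂(P x)

/-- `retL P A x = L(x, A) = P_x(τ_A < ∞)`. -/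
noncomputable def retL (P : Kernel X X) (A : Set X) (x : X) : ℝ≥0∞ :=
  ∑' n, retF P A n x

/-- `retE P A r x = E_x[r(τ_A) 1_{τ_A < ∞}]`. -/
noncomputable def retE (P : Kernel X X) (A : Set X) (r : ℕ → ℝ≥0∞) (x : X) : ℝ≥0∞ :=
  ∑' n, r n * retF P A n x

/-- `hitE P A r x = E_x[r(σ_A) 1_{σ_A < ∞}]`, `σ_A` the first hitting time. -/
noncomputable def hitE (P : Kernel X X) (A : Set X) (r : ℕ → ℝ≥0∞) (x : X) : ℝ≥0∞ :=
  if x ∈ A then r 0 else retE P A r x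

/-- `act P W x = PW(x) = ∫ W(y) P(x, dy)`. -/
noncomputable def act (P : Kernel X X) (W : X → ℝ≥0∞) (x : X) : ℝ≥0∞ :=
  ∫⁻ y, W y ∂(P x)

/-- `ψ`-irreducibility: `ψ` is a nontrivial σ-finite measure such that every set of
positive `ψ`-measure is reached with positive probability from every starting point. -/
def IsIrreducibility (P : Kernel X X) (ψ : Measure X) : Prop :=
  ψ ≠ 0 ∧ SigmaFinite ψ ∧
    ∀ A : Set X, MeasurableSet A → 0 < ψ A → ∀ x, 0 < ∑' n, iterP P (n + 1) x A

/-- `ψ` is a maximal irreducibility measure for `P`. -/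
def IsMaxIrreducibility (P : Kernel X X) (ψ : Measure X) : Prop :=
  IsIrreducibility P ψ ∧ ∀ ψ' : Measure X, IsIrreducibility P ψ' → ψ' ≪ ψ

/-- `A ∈ B⁺(X)`: a measurable set of positive `ψ`-measure. -/
def InBPlus (ψ : Measure X) (A : Set X) : Prop :=
  MeasurableSet A ∧ 0 < ψ A

/-- A petite set. -/
def PetiteSet (P : Kernel X X) (A : Set X) : Prop :=
  ∃ (a : ℕ → ℝ≥0∞) (ν : Measure X), (∑' n, a n) = 1 ∧ ν ≠ 0 ∧
    ∀ x ∈ A, ∀ B : Set X, MeasurableSet B → ν B ≤ ∑' n, a n * iterP P (n + 1) x B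

/-- The chain is transient. -/
def Transient (P : Kernel X X) (ψ : Measure X) : Prop :=
  IsMaxIrreducibility P ψ ∧
    ∃ A : ℕ → Set X, (⋃ i, A i) = Set.univ ∧
      ∀ i, InBPlus ψ (A i) ∧ (⨆ x ∈ A i, ∑' n, iterP P (n + 1) x (A i)) < ⊤

/-- A uniformly geometric transient set. -/
def UnifGeomTransientSet (P : Kernel X X) (A : Set X) : Prop :=
  ∃ κ : ℝ≥0, 1 < κ ∧ (⨆ x ∈ A, ∑' n, (κ : ℝ≥0∞) ^ (n + 1) * iterP P (n + 1) x A) < ⊤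

/-- The chain is geometrically transient. -/
def GeomTransient (P : Kernel X X) (ψ : Measure X) : Prop :=
  IsMaxIrreducibility P ψ ∧
    ∃ (D : Set X) (A : ℕ → Set X), ψ D = 0 ∧ D ∪ (⋃ i, A i) = Set.univ ∧
      ∀ i, InBPlus ψ (A i) ∧ UnifGeomTransientSet P (A i)

/-- A uniformly `ℓ`-transient set. -/
def UnifAlgTransientSet (P : Kernel X X) (ℓ : ℕ) (A : Set X) : Prop :=
  (⨆ x ∈ A, ∑' n, ((n + 1 : ℕ) : ℝ≥0∞) ^ ℓ * iterP P (n + 1) x A) < ⊤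

/-- The chain is algebraically (`ℓ`-)transient. -/
def AlgTransient (P : Kernel X X) (ψ : Measure X) (ℓ : ℕ) : Prop :=
  IsMaxIrreducibility P ψ ∧
    ∃ (D : Set X) (A : ℕ → Set X), ψ D = 0 ∧ D ∪ (⋃ i, A i) = Set.univ ∧
      ∀ i, InBPlus ψ (A i) ∧ UnifAlgTransientSet P ℓ (A i)

/-- `lifeDist P x n = P_x(τ = n)` where `τ = sup{n : Φ_n ∈ X}` is the lifetime of the
(sub-stochastic) chain, so that `P_x(τ = n) = P^n(x, X) - P^{n+1}(x, X)`. -/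
noncomputable def lifeDist (P : Kernel X X) (x : X) (n : ℕ) : ℝ≥0∞ :=
  iterP P n x Set.univ - iterP P (n + 1) x Set.univ

/-- `lifeE P r x = E_x[r(τ)]` for the lifetime `τ` (on the event `τ < ∞`). -/
noncomputable def lifeE (P : Kernel X X) (r : ℕ → ℝ≥0∞) (x : X) : ℝ≥0∞ :=
  ∑' n, r n * lifeDist P x n

/-- The family `Λ` of normalized increasing submultiplicative rate functions. -/
def InLambda (r : ℕ → ℝ≥0) : Prop :=
  Monotone r ∧ r 0 = 1 ∧ (∀ n, 1 ≤ r n) ∧ ∀ m n, r (m + n) ≤ r m * r n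

/-! ### The transition operator and its iterates -/

section Operator

variable {P : Kernel X X} {A B : Set X} {f g : X → ℝ≥0∞}

lemma act_measurable (hf : Measurable f) : Measurable (act P f) := hf.lintegral_kernel

lemma act_mono (h : f ≤ g) : act P f ≤ act P g := fun _ => lintegral_mono h

lemma act_add (hf : Measurable f) : act P (f + g) = act P f + act P g := by
  funext x; exact lintegral_add_left hf g

lemma act_const_mul (c : ℝ≥0∞) (hf : Measurable f) :
    act P (fun x => c * f x) = fun x => c * act P f x := by
  funext x; exact lintegral_const_mul c hf

lemma act_tsum {h : ℕ → X → ℝ≥0∞} (hh : ∀ n, Measurable (h n)) :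
    act P (fun x => ∑' n, h n x) = fun x => ∑' n, act P (h n) x := by
  funext x; exact lintegral_tsum fun n => (hh n).aemeasurable

lemma act_finset_sum {h : ℕ → X → ℝ≥0∞} (hh : ∀ n, Measurable (h n)) (s : Finset ℕ) :
    act P (fun x => ∑ n ∈ s, h n x) = fun x => ∑ n ∈ s, act P (h n) x := by
  funext x; exact lintegral_finsetSum s fun n _ => hh n

lemma iter_measurable (n : ℕ) (hf : Measurable f) : Measurable ((act P)^[n] f) := by
  induction n with
  | zero => exact hf
  | succ n ih => rw [Function.iterate_succ_apply']; exact act_measurable ih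

lemma iter_mono (n : ℕ) (h : f ≤ g) : (act P)^[n] f ≤ (act P)^[n] g := by
  induction n with
  | zero => exact h
  | succ n ih => simp only [Function.iterate_succ_apply']; exact act_mono ih

lemma iter_add (n : ℕ) (hf : Measurable f) :
    (act P)^[n] (f + g) = (act P)^[n] f + (act P)^[n] g := by
  induction n with
  | zero => rfl
  | succ n ih => simp only [Function.iterate_succ_apply', ih, act_add (iter_measurable n hf)]

lemma iter_const_mul (n : ℕ) (c : ℝ≥0∞) (hf : Measurable f) :
    (act P)^[n] (fun x => c * f x) = fun x => c * (act P)^[n] f x := by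
  induction n with
  | zero => rfl
  | succ n ih =>
    simp only [Function.iterate_succ_apply', ih, act_const_mul c (iter_measurable n hf)]

lemma iter_tsum (n : ℕ) {h : ℕ → X → ℝ≥0∞} (hh : ∀ n, Measurable (h n)) :
    (act P)^[n] (fun x => ∑' k, h k x) = fun x => ∑' k, (act P)^[n] (h k) x := by
  induction n with
  | zero => rfl
  | succ n ih =>
    simp only [Function.iterate_succ_apply', ih, act_tsum fun k => iter_measurable n (hh k)]

lemma measurable_one_indicator (hA : MeasurableSet A) :
    Measurable (A.indicator (fun _ => (1 : ℝ≥0∞))) := measurable_const.indicator hA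

lemma iterP_eq (n : ℕ) : (fun x => iterP P n x A) = (act P)^[n] (A.indicator fun _ => 1) := by
  induction n with
  | zero => rfl
  | succ n ih => rw [Function.iterate_succ_apply', ← ih]; rfl

lemma iterP_apply (n : ℕ) (x : X) :
    iterP P n x A = (act P)^[n] (A.indicator fun _ => 1) x := congrFun (iterP_eq n) x

lemma iterP_measurable (n : ℕ) (hA : MeasurableSet A) : Measurable fun x => iterP P n x A := by
  rw [iterP_eq]; exact iter_measurable n (measurable_one_indicator hA)

lemma iterP_add (m n : ℕ) (x : X) :
    iterP P (m + n) x A = (act P)^[m] (fun y => iterP P n y A) x := by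
  rw [iterP_apply, Function.iterate_add_apply, iterP_eq]

lemma iterP_mono (n : ℕ) (x : X) (h : A ⊆ B) : iterP P n x A ≤ iterP P n x B := by
  simp only [iterP_apply]
  exact iter_mono n (Set.indicator_le_indicator_of_subset h fun _ => zero_le) x

lemma iterP_le_one (hP : ∀ x, P x Set.univ ≤ 1) (n : ℕ) (x : X) : iterP P n x A ≤ 1 := by
  induction n generalizing x with
  | zero => exact Set.indicator_le_self' (f := fun _ => (1 : ℝ≥0∞)) (by simp) x
  | succ n ih =>
    calc iterP P (n + 1) x A ≤ ∫⁻ _, 1 ∂(P x) := lintegral_mono ih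
      _ ≤ 1 := by simpa using hP x

/-- Chebyshev's inequality for the iterates, with the threshold `0` and the factor `∞`. -/
lemma top_mul_iterP_le (n : ℕ) (x : X) (hA : MeasurableSet A) (h : ∀ y ∈ A, f y = ⊤) :
    ⊤ * iterP P n x A ≤ (act P)^[n] f x := by
  rw [iterP_apply, ← congrFun (iter_const_mul n ⊤ (measurable_one_indicator hA)) x]
  refine iter_mono n (fun y => ?_) x
  by_cases hy : y ∈ A <;> simp [hy, h]

lemma iterP_pos_of_pos (n : ℕ) (x : X) (hf : Measurable f) (hA : MeasurableSet A)
    (h : ∀ y ∈ A, 0 < f y) (hx : 0 < iterP P n x A) : 0 < (act P)^[n] f x := by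
  have h1 := top_mul_iterP_le (P := P) (f := fun y => ⊤ * f y) n x hA
    fun y hy => ENNReal.top_mul (h y hy).ne'
  rw [congrFun (iter_const_mul n ⊤ hf) x, ENNReal.top_mul hx.ne'] at h1
  refine pos_iff_ne_zero.2 fun h0 => ?_
  simp [h0] at h1

end Operator

/-! ### First return times -/

section Return

variable {P : Kernel X X} {A B : Set X}

lemma act_split (hA : MeasurableSet A) (f : X → ℝ≥0∞) (x : X) :
    act P f x = ∫⁻ y in A, f y ∂(P x) + ∫⁻ y in Aᶜ, f y ∂(P x) :=
  (lintegral_add_compl f hA).symm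

lemma retF_measurable (hA : MeasurableSet A) : ∀ n, Measurable (retF P A n)
  | 0 => measurable_const
  | 1 => P.measurable_coe hA
  | n + 2 => by
    have : retF P A (n + 2) = act P (Aᶜ.indicator (retF P A (n + 1))) := by
      funext x; exact (lintegral_indicator hA.compl _).symm
    rw [this]
    exact act_measurable ((retF_measurable hA (n + 1)).indicator hA.compl)

lemma retL_measurable (hA : MeasurableSet A) : Measurable (retL P A) :=
  Measurable.tsum (retF_measurable hA)

lemma retL_eq_tsum_succ (x : X) : retL P A x = ∑' n, retF P A (n + 1) x := by
  rw [retL, tsum_eq_zero_add' ENNReal.summable]; simp [retF]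

lemma retE_eq_tsum_succ (r : ℕ → ℝ≥0∞) (x : X) :
    retE P A r x = ∑' n, r (n + 1) * retF P A (n + 1) x := by
  rw [retE, tsum_eq_zero_add' ENNReal.summable]; simp [retF]

/-- One step of the chain splits off the value at time `1` from an expectation over `τ_A`. -/
lemma retE_step (hA : MeasurableSet A) (r : ℕ → ℝ≥0∞) (x : X) :
    retE P A r x = r 1 * P x A + ∫⁻ y in Aᶜ, retE P A (fun n => r (n + 1)) y ∂(P x) := by
  rw [retE_eq_tsum_succ, tsum_eq_zero_add' ENNReal.summable]
  simp only [retE_eq_tsum_succ]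
  rw [lintegral_tsum fun n => ((retF_measurable hA _).const_mul _).aemeasurable]
  congr 1
  refine tsum_congr fun n => ?_
  rw [lintegral_const_mul _ (retF_measurable hA _)]
  rfl

lemma retL_eq_retE (x : X) : retL P A x = retE P A (fun n => (n : ℝ≥0∞) ^ 0) x := by
  simp [retL, retE]

lemma retL_step (hA : MeasurableSet A) (x : X) :
    retL P A x = P x A + ∫⁻ y in Aᶜ, retL P A y ∂(P x) := by
  simp only [retL_eq_retE]
  rw [retE_step hA]; simp

/-- The discrete drift inequality for powers: it lets the drift conditions be iterated along the
excursion to bound moments from above. -/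
lemma succ_pow_le (n k : ℕ) :
    ((n + 1 : ℕ) : ℝ≥0∞) ^ k ≤ (n : ℝ≥0∞) ^ k + k * ((n + 1 : ℕ) : ℝ≥0∞) ^ (k - 1) := by
  norm_cast
  rcases k with _ | k
  · simp
  · have : n ^ k ≤ (n + 1) ^ k := Nat.pow_le_pow_left (by omega) k
    induction k with
    | zero => simp
    | succ k ih =>
      have h1 : n ^ k ≤ (n + 1) ^ k := Nat.pow_le_pow_left (by omega) k
      have := ih h1
      simp only [Nat.add_sub_cancel] at this ⊢
      have h2 := Nat.mul_le_mul_right (n + 1) this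
      have e1 : (n + 1) ^ (k + 1 + 1) = (n + 1) ^ (k + 1) * (n + 1) := by ring
      have e2 : (n ^ (k + 1) + (k + 1) * (n + 1) ^ k) * (n + 1)
        = n ^ (k + 2) + n ^ (k + 1) + (k + 1) * (n + 1) ^ (k + 1) := by ring
      have h3 : n ^ (k + 1) ≤ (n + 1) ^ (k + 1) := Nat.pow_le_pow_left (by omega) _
      rw [e1]
      nlinarith

/-- Inequality in the opposite direction to `succ_pow_le`, from which moments of the hitting time
are seen to satisfy the drift conditions. -/
lemma pow_add_le_succ_pow (n k : ℕ) :
    (n : ℝ≥0∞) ^ (k + 1) + ((n + 1 : ℕ) : ℝ≥0∞) ^ k ≤ ((n + 1 : ℕ) : ℝ≥0∞) ^ (k + 1) := by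
  norm_cast
  have h : n ^ k ≤ (n + 1) ^ k := Nat.pow_le_pow_left (by omega) k
  have e : (n + 1) ^ (k + 1) = n * (n + 1) ^ k + (n + 1) ^ k := by ring
  rw [e, pow_succ']
  gcongr

/-- Comparison principle: nonnegative functions satisfying the drift conditions dominate the
moments of the return time off `A`. -/
lemma retE_le_of_drift (hA : MeasurableSet A) (V : ℕ → X → ℝ≥0∞) (K : ℕ)
    (h1 : ∀ k ≤ K, ∀ x ∈ A, 1 ≤ V k x)
    (h2 : ∀ k ≤ K, ∀ x ∉ A, act P (V k) x + k * V (k - 1) x ≤ V k x) :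
    ∀ k ≤ K, ∀ x ∉ A, retE P A (fun n => (n : ℝ≥0∞) ^ k) x ≤ V k x := by
  intro k
  induction k using Nat.strong_induction_on with
  | _ k ih =>
    intro hk
    -- The return time is truncated at `N`, and the bound is proved by induction on `N`.
    let r : ℕ → ℕ → ℝ≥0∞ := fun N n => if n ≤ N then (n : ℝ≥0∞) ^ k else 0
    let s : ℕ → ℕ → ℝ≥0∞ := fun N n => if n ≤ N + 1 then ((n - 1 : ℕ) : ℝ≥0∞) ^ k else 0
    have hlow : ∀ x ∉ A,
        (k : ℝ≥0∞) * retE P A (fun n => (n : ℝ≥0∞) ^ (k - 1)) x ≤ k * V (k - 1) x := by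
      intro x hx
      rcases Nat.eq_zero_or_pos k with rfl | hk0
      · simp
      · gcongr
        exact ih (k - 1) (by omega) (by omega) x hx
    have key : ∀ N, ∀ x ∉ A, retE P A (r N) x ≤ V k x := by
      intro N
      induction N with
      | zero =>
        intro x _
        rw [retE_eq_tsum_succ]
        simp [r]
      | succ N ihN =>
        intro x hx
        have hsplit : retE P A (r (N + 1)) x
            ≤ retE P A (s N) x + k * retE P A (fun n => (n : ℝ≥0∞) ^ (k - 1)) x := by
          simp only [retE_eq_tsum_succ]
          rw [← ENNReal.tsum_mul_left, ← ENNReal.tsum_add]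
          refine ENNReal.tsum_le_tsum fun n => ?_
          rw [← mul_assoc, ← add_mul]
          gcongr
          by_cases hn : n ≤ N
          · simpa [r, s, hn] using succ_pow_le n k
          · simp [r, hn]
        have hs : retE P A (s N) x ≤ act P (V k) x := by
          rw [retE_step hA, act_split hA]
          refine add_le_add ?_ ?_
          · calc s N 1 * P x A ≤ 1 * P x A := by
                  gcongr
                  by_cases h0 : k = 0 <;> simp [s, h0]
              _ = ∫⁻ _ in A, 1 ∂(P x) := by simp
              _ ≤ ∫⁻ y in A, V k y ∂(P x) := setLIntegral_mono' hA (h1 k hk)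
          · refine setLIntegral_mono' hA.compl fun y hy => le_trans (le_of_eq ?_) (ihN y hy)
            simp [s, r]
        calc retE P A (r (N + 1)) x ≤ act P (V k) x + k * V (k - 1) x :=
              hsplit.trans (add_le_add hs (hlow x hx))
          _ ≤ V k x := h2 k hk x hx
    intro x hx
    rw [retE, ENNReal.tsum_eq_iSup_nat]
    refine iSup_le fun N => le_trans ?_ (key N x hx)
    refine le_trans (Finset.sum_le_sum fun n hn => ?_)
      (ENNReal.sum_le_tsum (f := fun n => r N n * retF P A n x) (Finset.range N))
    have : n ≤ N := (Finset.mem_range.1 hn).le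
    simp [r, this]

/-- A superharmonic function that is at least `1` on `A` dominates `L(·, A)` after one step. -/
lemma retL_le_act (hA : MeasurableSet A) (V : X → ℝ≥0∞) (h1 : ∀ x ∈ A, 1 ≤ V x)
    (h2 : ∀ x ∉ A, act P V x ≤ V x) (x : X) : retL P A x ≤ act P V x := by
  have h := retE_le_of_drift (P := P) hA (fun _ => V) 0 (fun _ _ => h1)
    (fun k hk x hx => by simpa [Nat.le_zero.1 hk] using h2 x hx) 0 le_rfl
  rw [retL_step hA, act_split hA]
  refine add_le_add ?_ ?_
  · calc P x A = ∫⁻ _ in A, 1 ∂(P x) := by simp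
      _ ≤ ∫⁻ y in A, V y ∂(P x) := setLIntegral_mono' hA h1
  · refine setLIntegral_mono' hA.compl fun y hy => ?_
    rw [retL_eq_retE]
    exact h y hy

lemma retL_le_one (hP : ∀ x, P x Set.univ ≤ 1) (hA : MeasurableSet A) (x : X) :
    retL P A x ≤ 1 := by
  have h : ∀ x, act P (fun _ => 1) x ≤ 1 := fun x => by simpa [act] using hP x
  exact (retL_le_act hA (fun _ => 1) (fun _ _ => le_rfl) (fun x _ => h x) x).trans (h x)

lemma retL_mono (hP : ∀ x, P x Set.univ ≤ 1) (hA : MeasurableSet A) (hB : MeasurableSet B)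
    (hBA : B ⊆ A) (x : X) : retL P B x ≤ retL P A x := by
  -- `V` is the probability of ever hitting `A`, time `0` included.
  let V : X → ℝ≥0∞ := fun x => if x ∈ A then 1 else retL P A x
  have hV : ∀ x, act P V x = retL P A x := by
    intro x
    rw [act_split hA, retL_step hA]
    congr 1
    · rw [setLIntegral_congr_fun hA (g := fun _ => 1) fun y hy => by simp [V, hy]]
      simp
    · exact setLIntegral_congr_fun hA.compl fun y hy => by
        have : y ∉ A := hy
        simp [V, this]
  rw [← hV]
  refine retL_le_act hB V (fun y hy => by simp [V, hBA hy]) (fun y _ => ?_) x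
  rw [hV]
  by_cases hy : y ∈ A
  · simpa [V, hy] using retL_le_one hP hA y
  · simp [V, hy]

/-- Decomposition of a visit to `A` at the previous visit. -/
lemma iterP_eq_last_exit (hA : MeasurableSet A) (n : ℕ) (x : X) :
    iterP P (n + 1) x A = retF P A (n + 1) x +
      ∑ j ∈ Finset.range n, (act P)^[j + 1] (A.indicator (retF P A (n - j))) x := by
  induction n generalizing x with
  | zero =>
    simp only [iterP, retF, Finset.range_zero, Finset.sum_empty, add_zero]
    simp [lintegral_indicator hA]
  | succ n ih =>
    have e : iterP P (n + 1 + 1) x A = act P (fun y => iterP P (n + 1) y A) x := rfl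
    have hm : ∀ m, Measurable (A.indicator (retF P A m)) :=
      fun m => (retF_measurable hA m).indicator hA
    rw [e, funext ih]
    have e2 := congrFun (act_add (P := P) (f := retF P A (n + 1))
      (g := fun y => ∑ j ∈ Finset.range n, (act P)^[j + 1] (A.indicator (retF P A (n - j))) y)
      (retF_measurable hA _)) x
    refine e2.trans ?_
    rw [Pi.add_apply, act_finset_sum fun j => iter_measurable _ (hm _), Finset.sum_range_succ',
      act_split hA, ← lintegral_indicator hA]
    simp only [← Function.iterate_succ_apply' (act P), Nat.add_sub_add_right]
    change (act P (A.indicator (retF P A (n + 1))) x + retF P A (n + 1 + 1) x) + _ = _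
    simp only [Nat.sub_zero, zero_add, Function.iterate_one]
    ring

lemma retF_le_iterP (hA : MeasurableSet A) (n : ℕ) (x : X) :
    retF P A (n + 1) x ≤ iterP P (n + 1) x A := by
  rw [iterP_eq_last_exit hA]; exact le_self_add

end Return

/-! ### Null sets of a maximal irreducibility measure -/

section Null

variable {P : Kernel X X} {ψ : Measure X} {A B : Set X}

lemma InBPlus.nonempty (hA : InBPlus ψ A) : A.Nonempty :=
  nonempty_of_measure_ne_zero hA.2.ne'

/-- Adding to `ψ` the one-step image of an equivalent finite measure gives another
irreducibility measure; by maximality, the one-step image is absolutely continuous. -/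
lemma IsMaxIrreducibility.null_step (hP : ∀ x, P x Set.univ ≤ 1) (hψ : IsMaxIrreducibility P ψ)
    (hB : MeasurableSet B) (h0 : ψ B = 0) : ∀ᵐ x ∂ψ, P x B = 0 := by
  obtain ⟨⟨hne, hσ, hirr⟩, hmax⟩ := hψ
  have hbind : ∀ C, MeasurableSet C → (ψ.toFinite.bind P) C = ∫⁻ x, P x C ∂ψ.toFinite :=
    fun C hC => Measure.bind_apply hC P.aemeasurable
  have hfin : IsFiniteMeasure (ψ.toFinite.bind P) := ⟨by
    rw [hbind _ MeasurableSet.univ]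
    calc ∫⁻ x, P x Set.univ ∂ψ.toFinite ≤ ∫⁻ _, 1 ∂ψ.toFinite := lintegral_mono hP
      _ < ⊤ := by simp⟩
  have hirr' : IsIrreducibility P (ψ.toFinite + ψ.toFinite.bind P) := by
    refine ⟨fun h => ?_, inferInstance, fun C hC hpos x => ?_⟩
    · have h1 := congrArg (fun μ : Measure X => μ Set.univ) h
      simp only [Measure.coe_add, Pi.add_apply, Measure.coe_zero, Pi.zero_apply,
        add_eq_zero] at h1
      exact hne (Measure.measure_univ_eq_zero.1 (toFinite_apply_eq_zero_iff.1 h1.1))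
    · by_cases hC0 : ψ C = 0
      · have hpos2 : 0 < ∫⁻ x, P x C ∂ψ.toFinite := by
          rw [← hbind C hC]
          simpa [toFinite_apply_eq_zero_iff.2 hC0] using hpos
        rw [lintegral_pos_iff_support (P.measurable_coe hC)] at hpos2
        have hS : MeasurableSet (Function.support fun x => P x C) :=
          measurableSet_support (P.measurable_coe hC)
        have hψS : 0 < ψ (Function.support fun x => P x C) :=
          pos_iff_ne_zero.2 fun h => hpos2.ne' (toFinite_apply_eq_zero_iff.2 h)
        have hx := hirr _ hS hψS x
        obtain ⟨n, hn⟩ : ∃ n, 0 < iterP P (n + 1) x (Function.support fun x => P x C) := by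
          by_contra! hcon
          exact hx.ne' (ENNReal.tsum_eq_zero.2 fun n => nonpos_iff_eq_zero.1 (hcon n))
        have h1 := iterP_pos_of_pos (f := fun y => iterP P 1 y C) (n + 1) x
          (iterP_measurable 1 hC) hS (fun y hy => by
            have : iterP P 1 y C = P y C := by simp [iterP, lintegral_indicator hC]
            rw [this]; exact pos_iff_ne_zero.2 hy) hn
        rw [← iterP_add] at h1
        exact h1.trans_le (ENNReal.le_tsum (f := fun n => iterP P (n + 1) x C) (n + 1))
      · exact hirr C hC (pos_iff_ne_zero.2 hC0) x
  have hB0 := hmax _ hirr' h0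
  rw [Measure.coe_add, Pi.add_apply, add_eq_zero, hbind B hB,
    lintegral_eq_zero_iff (P.measurable_coe hB)] at hB0
  have := hB0.2
  rw [Filter.EventuallyEq, ae_toFinite] at this
  exact this

lemma IsMaxIrreducibility.null_iterP (hP : ∀ x, P x Set.univ ≤ 1) (hψ : IsMaxIrreducibility P ψ)
    (hB : MeasurableSet B) (h0 : ψ B = 0) (n : ℕ) : ∀ᵐ x ∂ψ, iterP P n x B = 0 := by
  induction n with
  | zero =>
    filter_upwards [measure_eq_zero_iff_ae_notMem.1 h0] with x hx
    simp [iterP, hx]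
  | succ n ih =>
    filter_upwards [hψ.null_step hP (measurableSet_support (iterP_measurable n hB))
      (ae_iff.1 ih)] with x hx
    exact (lintegral_eq_zero_iff (iterP_measurable n hB)).2 (ae_iff.2 hx)

end Null

/-! ### Uniformly transient sets and return times -/

section Main

variable {P : Kernel X X} {ψ : Measure X} {A B : Set X}

/-- Telescoping form of `U 1_A + (limit term) = L + U (1_A L)`, where `U = ∑ P^n`. -/
lemma sum_iterP_add (hA : MeasurableSet A) (N : ℕ) (x : X) :
    ∑ n ∈ Finset.range N, iterP P (n + 1) x A + (act P)^[N] (retL P A) x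
      = retL P A x + ∑ n ∈ Finset.range N, (act P)^[n + 1] (A.indicator (retL P A)) x := by
  have hL := retL_measurable (P := P) hA
  have h1 : retL P A + act P (A.indicator (retL P A))
      = act P (A.indicator fun _ => 1) + act P (retL P A) := by
    funext x
    simp only [Pi.add_apply]
    rw [retL_step hA, act_split hA (retL P A)]
    simp only [act, lintegral_indicator hA]
    simp only [lintegral_const, one_mul, Measure.restrict_apply_univ]
    ring
  induction N with
  | zero => simp
  | succ N ih =>
    have h2 := congrFun (congrArg ((act P)^[N]) h1) x
    rw [iter_add N hL, iter_add N (act_measurable (measurable_one_indicator hA))] at h2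
    simp only [Pi.add_apply, ← Function.iterate_succ_apply (act P)] at h2
    rw [← iterP_apply] at h2
    rw [Finset.sum_range_succ, Finset.sum_range_succ, add_assoc, ← h2, ← add_assoc, ih,
      add_assoc]

lemma retL_le_tsum (hA : MeasurableSet A) (x : X) :
    retL P A x ≤ ∑' n, iterP P (n + 1) x A := by
  rw [retL_eq_tsum_succ]
  exact ENNReal.tsum_le_tsum fun n => retF_le_iterP hA n x

/-- If almost every visit to `A` is certainly followed by another one, then a visit to `A` from
`x` would entail infinitely many of them. -/
lemma retL_eq_zero_of_null (hA : MeasurableSet A) (x : X)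
    (hU : ∑' n, iterP P (n + 1) x A ≠ ⊤)
    (hN : ∀ n, iterP P n x {y | y ∈ A ∧ retL P A y < 1} = 0) : retL P A x = 0 := by
  have hL := retL_measurable (P := P) hA
  have hNm : MeasurableSet {y | y ∈ A ∧ retL P A y < 1} :=
    hA.inter (measurableSet_lt hL measurable_const)
  have hbound : ∀ N, retL P A x ≤ ∑' n, iterP P (n + N + 1) x A := by
    intro N
    have h1 : ∀ n, iterP P n x A ≤ (act P)^[n] (A.indicator (retL P A)) x := by
      intro n
      have h2 : (A.indicator fun _ => (1 : ℝ≥0∞)) ≤ A.indicator (retL P A)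
          + {y | y ∈ A ∧ retL P A y < 1}.indicator fun _ => 1 := by
        intro y
        by_cases hy : y ∈ A <;> by_cases hy1 : retL P A y < 1 <;> simp [hy, hy1]
        exact not_lt.1 hy1
      have h3 := iter_mono (P := P) n h2 x
      rw [iter_add n (hL.indicator hA), Pi.add_apply, ← iterP_apply, ← iterP_apply, hN,
        add_zero] at h3
      exact h3
    have h4 := sum_iterP_add (P := P) hA N x
    have h5 : ∑ n ∈ Finset.range N, iterP P (n + 1) x A ≠ ⊤ :=
      ne_top_of_le_ne_top hU (ENNReal.sum_le_tsum _)
    have h6 : retL P A x ≤ (act P)^[N] (retL P A) x := by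
      refine (ENNReal.add_le_add_iff_left h5).1 ?_
      rw [h4, add_comm]
      gcongr
      exact h1 _
    refine h6.trans ((iter_mono N (fun y => retL_le_tsum (P := P) hA y) x).trans (le_of_eq ?_))
    rw [iter_tsum N fun k => iterP_measurable _ hA]
    refine tsum_congr fun n => ?_
    rw [← iterP_add]
    congr 1
    omega
  have hlim := ENNReal.tendsto_sum_nat_add (fun n => iterP P (n + 1) x A) hU
  exact nonpos_iff_eq_zero.1 (ge_of_tendsto' hlim hbound)

lemma tsum_iterP_le (ℓ : ℕ) (x : X) : ∑' n, iterP P (n + 1) x A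
    ≤ ∑' n, ((n + 1 : ℕ) : ℝ≥0∞) ^ ℓ * iterP P (n + 1) x A := by
  refine ENNReal.tsum_le_tsum fun n => le_mul_of_one_le_left' (one_le_pow₀ ?_)
  norm_cast; omega

/-- A uniformly `ℓ`-transient set has a subset of positive measure from which the return
probability is bounded away from `1`. -/
lemma returns_of_transient (hP : ∀ x, P x Set.univ ≤ 1) (hψ : IsMaxIrreducibility P ψ) (ℓ : ℕ)
    (hA : InBPlus ψ A) (hT : UnifAlgTransientSet P ℓ A) :
    ∃ A : Set X, InBPlus ψ A ∧ (⨆ x ∈ A, retL P A x) < 1 ∧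
        (⨆ x ∈ A, retE P A (fun n => (n : ℝ≥0∞) ^ ℓ) x) < ⊤ := by
  obtain ⟨hAm, hApos⟩ := hA
  have hL := retL_measurable (P := P) hAm
  let N : Set X := {y | y ∈ A ∧ retL P A y < 1}
  have hNm : MeasurableSet N := hAm.inter (measurableSet_lt hL measurable_const)
  have hxT : ∀ x ∈ A, ∑' n, ((n + 1 : ℕ) : ℝ≥0∞) ^ ℓ * iterP P (n + 1) x A < ⊤ :=
    fun x hx => lt_of_le_of_lt (le_iSup₂ (f := fun x (_ : x ∈ A) =>
      ∑' n, ((n + 1 : ℕ) : ℝ≥0∞) ^ ℓ * iterP P (n + 1) x A) x hx) hT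
  have hNpos : 0 < ψ N := by
    refine pos_iff_ne_zero.2 fun h0 => ?_
    have hae : ∀ᵐ x ∂ψ, ∀ n, iterP P n x N = 0 :=
      ae_all_iff.2 fun n => hψ.null_iterP hP hNm h0 n
    obtain ⟨x, hxA, hx⟩ : ∃ x ∈ A, ∀ n, iterP P n x N = 0 := by
      by_contra! hcon
      refine hApos.ne' (measure_mono_null (fun y hy => ?_) (ae_iff.1 hae))
      simpa using hcon y hy
    have h1 := retL_eq_zero_of_null hAm x
      ((tsum_iterP_le ℓ x).trans_lt (hxT x hxA)).ne hx
    have h2 : x ∈ N := ⟨hxA, by rw [h1]; exact zero_lt_one⟩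
    simpa [iterP, h2] using hx 0
  obtain ⟨k, hk⟩ : ∃ k : ℕ, 0 < ψ {y | y ∈ A ∧ retL P A y ≤ 1 - ((k : ℝ≥0∞) + 1)⁻¹} := by
    by_contra! hcon
    refine hNpos.ne' (measure_mono_null (fun y hy => ?_)
      (measure_iUnion_null fun k => nonpos_iff_eq_zero.1 (hcon k)))
    obtain ⟨n, hn⟩ := ENNReal.exists_inv_nat_lt (tsub_pos_of_lt hy.2).ne'
    refine Set.mem_iUnion.2 ⟨n, hy.1, ?_⟩
    have h3 : ((n : ℝ≥0∞) + 1)⁻¹ ≤ 1 - retL P A y :=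
      (ENNReal.inv_le_inv.2 le_self_add).trans hn.le
    exact ENNReal.le_sub_of_add_le_left (ne_top_of_le_ne_top ENNReal.one_ne_top
      (h3.trans tsub_le_self)) (by
        calc ((n : ℝ≥0∞) + 1)⁻¹ + retL P A y ≤ 1 - retL P A y + retL P A y := by gcongr
          _ = 1 := tsub_add_cancel_of_le hy.2.le)
  have hBm : MeasurableSet {y | y ∈ A ∧ retL P A y ≤ 1 - ((k : ℝ≥0∞) + 1)⁻¹} :=
    hAm.inter (measurableSet_le hL measurable_const)
  refine ⟨_, ⟨hBm, hk⟩, ?_, ?_⟩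
  · refine lt_of_le_of_lt (b := 1 - ((k : ℝ≥0∞) + 1)⁻¹) (iSup₂_le fun x hx => ?_) ?_
    · exact (retL_mono hP hAm hBm (fun y hy => hy.1) x).trans hx.2
    · exact ENNReal.sub_lt_self ENNReal.one_ne_top one_ne_zero
        (ENNReal.inv_ne_zero.2 (by finiteness))
  · refine lt_of_le_of_lt (iSup₂_le fun x hx => ?_) hT
    refine le_trans ?_ (le_iSup₂ (f := fun x (_ : x ∈ A) =>
      ∑' n, ((n + 1 : ℕ) : ℝ≥0∞) ^ ℓ * iterP P (n + 1) x A) x hx.1)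
    rw [retE_eq_tsum_succ]
    refine ENNReal.tsum_le_tsum fun n => ?_
    gcongr
    exact (retF_le_iterP hBm n x).trans (iterP_mono _ x fun y hy => hy.1)

/-- A set contained in `{P^n(·, A) ≥ 1/m}` on which the weighted potential of `A` is at most `m`
inherits uniform `ℓ`-transience from `A`. -/
lemma unifAlgTransient_level (ℓ n m : ℕ) (hA : MeasurableSet A)
    (h1 : ∀ x ∈ B, 1 ≤ (m : ℝ≥0∞) * iterP P n x A)
    (h2 : ∀ x ∈ B, ∑' k, ((k + 1 : ℕ) : ℝ≥0∞) ^ ℓ * iterP P (k + 1) x A ≤ m) :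
    UnifAlgTransientSet P ℓ B := by
  refine lt_of_le_of_lt (b := (m : ℝ≥0∞) * m) (iSup₂_le fun x hx => ?_) (by finiteness)
  refine le_trans ?_ (mul_le_mul_right (h2 x hx) _)
  rw [← ENNReal.tsum_mul_left]
  have h3 : ∀ k, iterP P k x B ≤ m * iterP P (k + n) x A := by
    intro k
    rw [iterP_add, ← congrFun (iter_const_mul k (m : ℝ≥0∞) (iterP_measurable n hA)) x,
      iterP_apply]
    refine iter_mono k (fun y => ?_) x
    by_cases hy : y ∈ B
    · simpa [hy] using h1 y hy
    · simp [hy]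
  calc ∑' k, ((k + 1 : ℕ) : ℝ≥0∞) ^ ℓ * iterP P (k + 1) x B
      ≤ ∑' k, (m : ℝ≥0∞) * (((k + n + 1 : ℕ) : ℝ≥0∞) ^ ℓ * iterP P (k + n + 1) x A) := by
        refine ENNReal.tsum_le_tsum fun k => ?_
        rw [mul_left_comm]
        refine mul_le_mul' (pow_le_pow_left₀ zero_le (by norm_cast; omega) _) ?_
        rw [add_right_comm]
        exact h3 (k + 1)
    _ ≤ _ := ENNReal.tsum_comp_le_tsum_of_injective (add_left_injective n)
        (fun k => (m : ℝ≥0∞) * (((k + 1 : ℕ) : ℝ≥0∞) ^ ℓ * iterP P (k + 1) x A))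

/-- The sets `{P^{n+1}(·, A) ≥ 1/m, G ≤ m}`, with `G` the weighted potential of `A`, cover
`{G < ∞}`, which has full measure. -/
lemma algTransient_of_set (hψ : IsMaxIrreducibility P ψ) (ℓ : ℕ)
    (hA : InBPlus ψ A) (hT : UnifAlgTransientSet P ℓ A) : AlgTransient P ψ ℓ := by
  refine ⟨hψ, ?_⟩
  let G : X → ℝ≥0∞ := fun x => ∑' k, ((k + 1 : ℕ) : ℝ≥0∞) ^ ℓ * iterP P (k + 1) x A
  have hG : Measurable G := Measurable.tsum fun k => (iterP_measurable _ hA.1).const_mul _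
  -- `{G < ∞}` is absorbing and contains `A`, so its complement is null.
  have hGtop : ψ {x | G x = ⊤} = 0 := by
    by_contra hne
    obtain ⟨x, hx⟩ := hA.nonempty
    have hS : MeasurableSet {x | G x = ⊤} := hG (measurableSet_singleton ⊤)
    refine (hψ.1.2.2 _ hS (pos_iff_ne_zero.2 hne) x).ne' (ENNReal.tsum_eq_zero.2 fun n => ?_)
    have hGx : G x < ⊤ := lt_of_le_of_lt (le_iSup₂ (f := fun x (_ : x ∈ A) => G x) x hx) hT
    have h1 : (act P)^[n + 1] G x ≤ G x := by
      have e : (act P)^[n + 1] G x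
          = ∑' k, ((k + 1 : ℕ) : ℝ≥0∞) ^ ℓ * iterP P (k + (n + 1) + 1) x A := by
        rw [iter_tsum (n + 1) fun k => (iterP_measurable _ hA.1).const_mul _]
        refine tsum_congr fun k => ?_
        rw [congrFun (iter_const_mul (n + 1) _ (iterP_measurable _ hA.1)) x, ← iterP_add]
        congr 2; omega
      rw [e]
      refine le_trans (ENNReal.tsum_le_tsum fun k => ?_)
        (ENNReal.tsum_comp_le_tsum_of_injective (add_left_injective (n + 1))
        (fun k => ((k + 1 : ℕ) : ℝ≥0∞) ^ ℓ * iterP P (k + 1) x A))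
      refine mul_le_mul' (pow_le_pow_left₀ zero_le ?_ _) le_rfl
      norm_cast; omega
    by_contra h0
    have h2 := top_mul_iterP_le (P := P) (f := G) (n + 1) x hS fun y hy => hy
    rw [ENNReal.top_mul h0] at h2
    exact (h2.trans h1).not_gt hGx
  let B : ℕ → Set X := fun i =>
    {x | 1 ≤ (i.unpair.2 : ℝ≥0∞) * iterP P (i.unpair.1 + 1) x A ∧ G x ≤ i.unpair.2}
  have hB : ∀ i, MeasurableSet (B i) := fun i =>
    (measurableSet_le measurable_const ((iterP_measurable _ hA.1).const_mul _)).inter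
      (measurableSet_le hG measurable_const)
  have hcover : ∀ x, G x ≠ ⊤ → ∃ i, x ∈ B i := by
    intro x hx
    obtain ⟨n, hn⟩ : ∃ n, 0 < iterP P (n + 1) x A := by
      by_contra! hcon
      exact (hψ.1.2.2 A hA.1 hA.2 x).ne'
        (ENNReal.tsum_eq_zero.2 fun n => nonpos_iff_eq_zero.1 (hcon n))
    obtain ⟨m1, hm1⟩ := ENNReal.exists_nat_mul_gt hn.ne' ENNReal.one_ne_top
    obtain ⟨m2, hm2⟩ := ENNReal.exists_nat_gt hx
    refine ⟨Nat.pair n (max m1 m2), ?_, ?_⟩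
    · simp only [Nat.unpair_pair]
      refine hm1.le.trans ?_
      gcongr
      exact le_max_left _ _
    · simp only [Nat.unpair_pair]
      refine hm2.le.trans ?_
      gcongr
      exact le_max_right _ _
  -- Null members of the cover are replaced by `A` and absorbed into the exceptional set.
  refine ⟨{x | G x = ⊤} ∪ ⋃ i ∈ {i | ψ (B i) = 0}, B i,
    fun i => if ψ (B i) = 0 then A else B i, ?_, ?_, fun i => ?_⟩
  · refine measure_union_null hGtop ?_
    exact (measure_biUnion_null_iff (Set.to_countable _)).2 fun i hi => hi
  · refine Set.eq_univ_of_forall fun x => ?_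
    by_cases hx : G x = ⊤
    · exact Or.inl (Or.inl hx)
    · obtain ⟨i, hi⟩ := hcover x hx
      by_cases h0 : ψ (B i) = 0
      · exact Or.inl (Or.inr (Set.mem_biUnion (show i ∈ {i | ψ (B i) = 0} from h0) hi))
      · exact Or.inr (Set.mem_iUnion.2 ⟨i, by simpa [h0] using hi⟩)
  · by_cases h0 : ψ (B i) = 0
    · simpa [h0] using ⟨hA, hT⟩
    · simp only [h0, if_false]
      exact ⟨⟨hB i, pos_iff_ne_zero.2 h0⟩, unifAlgTransient_level ℓ (i.unpair.1 + 1) i.unpair.2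
        hA.1 (fun x hx => hx.1) fun x hx => hx.2⟩

/-! ### From return times to the potential -/

lemma le_div_of_le_add_mul {y K r : ℝ≥0∞} (hy : y ≠ ⊤) (hr : r < 1) (h : y ≤ K + r * y) :
    y ≤ K / (1 - r) := by
  have hry : r * y ≠ ⊤ := ENNReal.mul_ne_top hr.ne_top hy
  have h1 : (1 - r) * y + r * y = y := by rw [← add_mul, tsub_add_cancel_of_le hr.le, one_mul]
  rw [ENNReal.le_div_iff_mul_le (Or.inl (tsub_pos_of_lt hr).ne') (Or.inl (by finiteness)), mul_comm]
  exact (ENNReal.add_le_add_iff_right hry).1 (h1.trans_le h)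

/-- Renewal inequality for truncated weighted potentials: the last-exit decomposition, with the
weight of a sum `j + m` split between the time `j` of the previous visit and the excursion
length `m`. -/
lemma renewal_bound (hA : MeasurableSet A) (w : ℕ → ℝ≥0∞) {a c M ρ : ℝ≥0∞}
    (hw : ∀ j m, w (j + m) ≤ a * w j + c * w m) (hM : ∀ y ∈ A, retE P A w y ≤ M)
    (hρ : ∀ y ∈ A, retL P A y ≤ ρ) {x : X} (hx : x ∈ A) (N : ℕ) :
    ∑ n ∈ Finset.range N, w (n + 1) * iterP P (n + 1) x A ≤
      M + a * ρ * ∑ n ∈ Finset.range N, w (n + 1) * iterP P (n + 1) x A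
        + c * M * ∑ n ∈ Finset.range N, iterP P (n + 1) x A := by
  have hm : ∀ m, Measurable (A.indicator (retF P A m)) :=
    fun m => (retF_measurable hA m).indicator hA
  let h : ℕ → ℕ → ℝ≥0∞ := fun j m =>
    (a * w (j + 1) + c * w m) * (act P)^[j + 1] (A.indicator (retF P A m)) x
  have hj : ∀ j, ∑' m, h j (m + 1) ≤ (a * w (j + 1) * ρ + c * M) * iterP P (j + 1) x A := by
    intro j
    calc ∑' m, h j (m + 1)
        = (act P)^[j + 1] (fun y => ∑' m, (a * w (j + 1) + c * w (m + 1)) *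
            A.indicator (retF P A (m + 1)) y) x := by
          rw [iter_tsum (j + 1) fun m => (hm (m + 1)).const_mul _]
          exact tsum_congr fun m => (congrFun (iter_const_mul (j + 1) _ (hm (m + 1))) x).symm
      _ ≤ (act P)^[j + 1] (fun y => (a * w (j + 1) * ρ + c * M) *
            A.indicator (fun _ => 1) y) x := by
          refine iter_mono (j + 1) (fun y => ?_) x
          by_cases hy : y ∈ A
          · simp only [hy, Set.indicator_of_mem, mul_one, add_mul, mul_assoc c]
            rw [ENNReal.tsum_add, ENNReal.tsum_mul_left, ENNReal.tsum_mul_left,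
              ← retL_eq_tsum_succ, ← retE_eq_tsum_succ]
            gcongr
            · exact hρ y hy
            · exact hM y hy
          · simp [hy]
      _ = _ := by
          rw [iterP_apply]
          exact congrFun (iter_const_mul (j + 1) _ (measurable_one_indicator hA)) x
  have hdouble : ∑ n ∈ Finset.range N, ∑ j ∈ Finset.range n, h j (n - j)
      ≤ ∑ j ∈ Finset.range N, ∑' m, h j (m + 1) := by
    rw [Finset.sum_comm' (t' := Finset.range N) (s' := fun j => Finset.Ico (j + 1) N)
      (by intro n j; simp only [Finset.mem_range, Finset.mem_Ico]; omega)]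
    refine Finset.sum_le_sum fun j _ => ?_
    rw [Finset.sum_Ico_eq_sum_range]
    have : ∀ i, h j (j + 1 + i - j) = h j (i + 1) := fun i => by congr 1; omega
    simp only [this]
    exact ENNReal.sum_le_tsum (f := fun i => h j (i + 1)) _
  calc ∑ n ∈ Finset.range N, w (n + 1) * iterP P (n + 1) x A
      ≤ ∑ n ∈ Finset.range N, (w (n + 1) * retF P A (n + 1) x
          + ∑ j ∈ Finset.range n, h j (n - j)) := by
        refine Finset.sum_le_sum fun n _ => ?_
        rw [iterP_eq_last_exit hA, mul_add, Finset.mul_sum]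
        gcongr with j hj
        have hjn := Finset.mem_range.1 hj
        have e : n + 1 = j + 1 + (n - j) := by omega
        rw [e]
        exact mul_le_mul' (hw _ _) le_rfl
    _ ≤ M + ∑ j ∈ Finset.range N, (a * w (j + 1) * ρ + c * M) * iterP P (j + 1) x A := by
        rw [Finset.sum_add_distrib]
        refine add_le_add ?_ (hdouble.trans (Finset.sum_le_sum fun j _ => hj j))
        refine le_trans ?_ (hM x hx)
        rw [retE_eq_tsum_succ]
        exact ENNReal.sum_le_tsum _
    _ = _ := by
        simp only [add_mul, Finset.sum_add_distrib, Finset.mul_sum]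
        rw [add_assoc]
        congr 2
        exact Finset.sum_congr rfl fun _ _ => by ring

/-- With `a = (1 + 1/q) ^ ℓ` and `c = (1 + q) ^ ℓ`, a power of a sum splits according to whether
`m ≤ j / q`; for `q` large, `a` is close enough to `1`. -/
lemma exists_weight_split (ℓ : ℕ) {ρ : ℝ≥0∞} (hρ : ρ < 1) : ∃ a c : ℝ≥0∞, a * ρ < 1 ∧ c < ⊤ ∧
    ∀ j m : ℕ, ((j + m : ℕ) : ℝ≥0∞) ^ ℓ ≤ a * (j : ℝ≥0∞) ^ ℓ + c * (m : ℝ≥0∞) ^ ℓ := by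
  have hlim : Filter.Tendsto (fun q : ℕ => (1 + (q : ℝ≥0∞)⁻¹) ^ ℓ * ρ) Filter.atTop
      (nhds ((1 + 0) ^ ℓ * ρ)) :=
    ENNReal.Tendsto.mul_const (ENNReal.Tendsto.pow
      (tendsto_const_nhds.add ENNReal.tendsto_inv_nat_nhds_zero)) (Or.inr hρ.ne_top)
  obtain ⟨q, hq, hq1⟩ := ((hlim.eventually_lt_const (u := 1) (by simpa using hρ)).and
    (Filter.eventually_ge_atTop 1)).exists
  refine ⟨_, (1 + (q : ℝ≥0∞)) ^ ℓ, hq, by finiteness, fun j m => ?_⟩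
  have hq0 : (q : ℝ≥0∞) ≠ 0 := by norm_cast; omega
  rw [← mul_pow, ← mul_pow]
  push_cast
  rcases le_total (m * q) j with h | h
  · refine le_add_right (pow_le_pow_left₀ zero_le ?_ _)
    have h' : (m : ℝ≥0∞) * q ≤ j := by exact_mod_cast h
    rw [add_mul, one_mul]
    gcongr
    rw [mul_comm, ← div_eq_mul_inv]
    exact (ENNReal.le_div_iff_mul_le (Or.inl hq0) (Or.inl (by finiteness))).2 h'
  · refine le_add_left (pow_le_pow_left₀ zero_le ?_ _)
    have h' : (j : ℝ≥0∞) ≤ m * q := by exact_mod_cast h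
    rw [add_mul, one_mul, add_comm, mul_comm (q : ℝ≥0∞)]
    gcongr

/-- The renewal inequality bounds first the unweighted and then the `n ^ ℓ`-weighted truncated
potentials, uniformly in the truncation level. -/
lemma transient_of_returns (hP : ∀ x, P x Set.univ ≤ 1) (ℓ : ℕ) (hA : MeasurableSet A)
    (h1 : (⨆ x ∈ A, retL P A x) < 1)
    (h2 : (⨆ x ∈ A, retE P A (fun n => (n : ℝ≥0∞) ^ ℓ) x) < ⊤) :
    UnifAlgTransientSet P ℓ A := by
  set ρ := ⨆ x ∈ A, retL P A x
  set M := ⨆ x ∈ A, retE P A (fun n => (n : ℝ≥0∞) ^ ℓ) x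
  have hρ : ∀ y ∈ A, retL P A y ≤ ρ := fun y hy =>
    le_iSup₂ (f := fun y (_ : y ∈ A) => retL P A y) y hy
  have hM : ∀ y ∈ A, retE P A (fun n => (n : ℝ≥0∞) ^ ℓ) y ≤ M := fun y hy =>
    le_iSup₂ (f := fun y (_ : y ∈ A) => retE P A (fun n => (n : ℝ≥0∞) ^ ℓ) y) y hy
  obtain ⟨a, c, ha, hc, hw⟩ := exists_weight_split ℓ h1
  have hp : ∀ n x, iterP P n x A ≠ ⊤ := fun n x =>
    ne_top_of_le_ne_top ENNReal.one_ne_top (iterP_le_one hP n x)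
  have hU : ∀ x ∈ A, ∀ N, ∑ n ∈ Finset.range N, iterP P (n + 1) x A ≤ ρ / (1 - ρ) := by
    intro x hx N
    refine le_div_of_le_add_mul (ENNReal.sum_ne_top.2 fun n _ => hp _ _) h1 ?_
    have h3 := renewal_bound (P := P) hA (fun _ => 1) (a := 1) (c := 0) (M := ρ)
      (fun _ _ => by simp) (fun y hy => by simpa [retE, retL] using hρ y hy) hρ hx N
    simpa using h3
  refine lt_of_le_of_lt (b := (M + c * M * (ρ / (1 - ρ))) / (1 - a * ρ))
    (iSup₂_le fun x hx => ?_) ?_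
  · rw [ENNReal.tsum_eq_iSup_nat]
    refine iSup_le fun N => ?_
    refine le_div_of_le_add_mul (ENNReal.sum_ne_top.2 fun n _ =>
      ENNReal.mul_ne_top (by finiteness) (hp _ _)) ha ?_
    refine (renewal_bound hA (fun n => (n : ℝ≥0∞) ^ ℓ) hw hM hρ hx N).trans ?_
    rw [add_right_comm]
    gcongr
    exact hU x hx N
  · have hd : ρ / (1 - ρ) < ⊤ := ENNReal.div_lt_top h1.ne_top (tsub_pos_of_lt h1).ne'
    refine ENNReal.div_lt_top ?_ (tsub_pos_of_lt ha).ne'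
    exact ENNReal.add_ne_top.2 ⟨h2.ne, ENNReal.mul_ne_top (ENNReal.mul_ne_top hc.ne h2.ne) hd.ne⟩

/-! ### Drift conditions -/

lemma succ_pow_le_two_pow_mul (n ℓ : ℕ) (hn : n ≠ 0) :
    ((n + 1 : ℕ) : ℝ≥0∞) ^ ℓ ≤ 2 ^ ℓ * (n : ℝ≥0∞) ^ ℓ := by
  rw [← mul_pow]
  norm_cast
  exact Nat.pow_le_pow_left (by omega) ℓ

/-- The comparison principle for `V k = W (ℓ - k)` bounds the moments of `τ_A` from outside `A`;
one more step of the chain bounds them from inside. -/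
lemma returns_of_drift (ℓ : ℕ) (hA : MeasurableSet A) (W : ℕ → X → ℝ≥0∞)
    {d b : ℝ≥0∞} (hd : d < ⊤) (hb : b < 1) (h1 : ∀ i ≤ ℓ, ∀ x ∈ A, 1 ≤ W i x)
    (h2 : ∀ i ≤ ℓ, ∀ x ∉ A, act P (W i) x + ((ℓ - i : ℕ) : ℝ≥0∞) * W (i + 1) x ≤ W i x)
    (h0 : ∀ x ∈ A, act P (W 0) x ≤ d) (hl : ∀ x ∈ A, act P (W ℓ) x ≤ b) :
    (⨆ x ∈ A, retL P A x) < 1 ∧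
      (⨆ x ∈ A, retE P A (fun n => (n : ℝ≥0∞) ^ ℓ) x) < ⊤ := by
  constructor
  · refine lt_of_le_of_lt (iSup₂_le fun x hx => ?_) hb
    refine (retL_le_act hA (W ℓ) (h1 ℓ le_rfl) (fun y hy => ?_) x).trans (hl x hx)
    exact le_self_add.trans (h2 ℓ le_rfl y hy)
  · have hcmp := retE_le_of_drift (P := P) hA (fun k => W (ℓ - k)) ℓ (fun k _ => h1 _ (by omega))
      (fun k hk x hx => by
        refine le_trans (le_of_eq ?_) (h2 (ℓ - k) (by omega) x hx)
        rcases k with _ | k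
        · simp
        · rw [show ℓ - (ℓ - (k + 1)) = k + 1 by omega,
            show ℓ - (k + 1) + 1 = ℓ - (k + 1 - 1) by omega]) ℓ le_rfl
    simp only [Nat.sub_self] at hcmp
    refine lt_of_le_of_lt (b := 2 ^ ℓ * d) (iSup₂_le fun x hx => ?_) (by finiteness)
    refine le_trans ?_ (mul_le_mul_right (h0 x hx) _)
    rw [retE_step hA, act_split hA, mul_add]
    refine add_le_add ?_ ?_
    · calc ((1 : ℕ) : ℝ≥0∞) ^ ℓ * P x A = ∫⁻ _ in A, 1 ∂(P x) := by simp
        _ ≤ ∫⁻ y in A, W 0 y ∂(P x) := setLIntegral_mono' hA (h1 0 (zero_le))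
        _ ≤ 2 ^ ℓ * ∫⁻ y in A, W 0 y ∂(P x) :=
          le_mul_of_one_le_left' (one_le_pow₀ one_le_two)
    · rw [← lintegral_const_mul' _ _ (by finiteness)]
      refine setLIntegral_mono' hA.compl fun y hy => ?_
      refine le_trans ?_ (mul_le_mul_right (hcmp y hy) _)
      rw [retE_eq_tsum_succ, retE_eq_tsum_succ, ← ENNReal.tsum_mul_left]
      refine ENNReal.tsum_le_tsum fun n => ?_
      rw [← mul_assoc]
      gcongr
      exact succ_pow_le_two_pow_mul (n + 1) ℓ (by omega)

/-- `k! · E_x[(σ_A + 1)^k 1_{σ_A < ∞}]`, where `σ_A` is the first hitting time of `A` (time `0`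
included). The factorial absorbs the coefficient of the lower-order drift term. -/
noncomputable def driftU (P : Kernel X X) (A : Set X) (k : ℕ) (x : X) : ℝ≥0∞ :=
  if x ∈ A then (k.factorial : ℝ≥0∞)
  else k.factorial * retE P A (fun n => ((n + 1 : ℕ) : ℝ≥0∞) ^ k) x

lemma retE_measurable (hA : MeasurableSet A) (r : ℕ → ℝ≥0∞) : Measurable (retE P A r) :=
  Measurable.tsum fun n => (retF_measurable hA n).const_mul _

lemma driftU_measurable (hA : MeasurableSet A) (k : ℕ) : Measurable (driftU P A k) :=
  Measurable.ite hA measurable_const ((retE_measurable hA _).const_mul _)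

/-- One step of the chain turns `σ_A + 1` into `τ_A`. -/
lemma act_driftU (hA : MeasurableSet A) (k : ℕ) (x : X) :
    act P (driftU P A k) x = k.factorial * retE P A (fun n => (n : ℝ≥0∞) ^ k) x := by
  rw [retE_step hA, act_split hA, mul_add]
  congr 1
  · rw [setLIntegral_congr_fun hA (g := fun _ => (k.factorial : ℝ≥0∞))
      fun y hy => by simp [driftU, hy]]
    simp
  · rw [← lintegral_const_mul' _ _ (by finiteness)]
    exact setLIntegral_congr_fun hA.compl fun y hy => by
      have : y ∉ A := hy
      simp [driftU, this]

lemma driftU_drift (hA : MeasurableSet A) (k : ℕ) {x : X} (hx : x ∉ A) :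
    act P (driftU P A k) x + k * driftU P A (k - 1) x ≤ driftU P A k x := by
  rw [act_driftU hA]
  rcases k with _ | k
  · simp [driftU, hx]
  · simp only [driftU, hx, if_false, Nat.add_sub_cancel, ← mul_assoc]
    rw [← Nat.cast_mul, ← Nat.factorial_succ, ← mul_add]
    gcongr
    simp only [retE]
    rw [← ENNReal.tsum_add]
    refine ENNReal.tsum_le_tsum fun n => ?_
    rw [← add_mul]
    gcongr
    exact pow_add_le_succ_pow n k

end Main

theorem algTransient_tfae
    {X : Type*} [MeasurableSpace X] [MeasurableSpace.CountablyGenerated X]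
    (P : Kernel X X) (hP : ∀ x, P x Set.univ ≤ 1) (ψ : Measure X)
    (hψ : IsMaxIrreducibility P ψ) (ℓ : ℕ) (hℓ : 1 ≤ ℓ) :
    [(∃ A : Set X, InBPlus ψ A ∧ UnifAlgTransientSet P ℓ A),
     (∃ A : Set X, InBPlus ψ A ∧ (⨆ x ∈ A, retL P A x) < 1 ∧
        (⨆ x ∈ A, retE P A (fun n => (n : ℝ≥0∞) ^ ℓ) x) < ⊤),
     (∃ A : Set X, InBPlus ψ A ∧ ∃ d : ℝ≥0∞, 0 < d ∧ d < ⊤ ∧ ∃ b : ℝ≥0∞, 0 < b ∧ b < 1 ∧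
        ∃ W : ℕ → X → ℝ≥0∞, (∀ i, Measurable (W i)) ∧ (∀ x, W (ℓ + 1) x = 0) ∧
          (∃ x₀, ∀ i ≤ ℓ, W i x₀ < ⊤) ∧
          (∀ i ≤ ℓ, ∀ x ∈ A, 1 ≤ W i x) ∧
          (∀ i ≤ ℓ, ∀ x ∉ A, act P (W i) x + ((ℓ - i : ℕ) : ℝ≥0∞) * W (i + 1) x ≤ W i x) ∧
          (∀ x ∈ A, act P (W 0) x ≤ d) ∧
          (∀ x ∈ A, act P (W ℓ) x ≤ b)),
     AlgTransient P ψ ℓ].TFAE := by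
  tfae_have 1 → 4 := fun ⟨A, hA, hT⟩ => algTransient_of_set hψ ℓ hA hT
  tfae_have 4 → 1 := fun ⟨_, _, A, _, _, h⟩ => ⟨A 0, h 0⟩
  tfae_have 1 → 2 := fun ⟨A, hA, hT⟩ => returns_of_transient hP hψ ℓ hA hT
  tfae_have 2 → 1 := fun ⟨A, hA, h1, h2⟩ => ⟨A, hA, transient_of_returns hP ℓ hA.1 h1 h2⟩
  tfae_have 3 → 2 := by
    rintro ⟨A, hA, d, _, hd, b, _, hb, W, _, _, _, h1, h2, h0, hl⟩
    exact ⟨A, hA, returns_of_drift ℓ hA.1 W hd hb h1 h2 h0 hl⟩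
  tfae_have 2 → 3 := by
    rintro ⟨A, hA, h1, h2⟩
    have hρ : ∀ x ∈ A, retL P A x ≤ _ :=
      fun x hx => le_iSup₂ (f := fun x (_ : x ∈ A) => retL P A x) x hx
    have hM : ∀ x ∈ A, retE P A (fun n => (n : ℝ≥0∞) ^ ℓ) x ≤ _ := fun x hx =>
      le_iSup₂ (f := fun x (_ : x ∈ A) => retE P A (fun n => (n : ℝ≥0∞) ^ ℓ) x) x hx
    refine ⟨A, hA, ℓ.factorial * (⨆ x ∈ A, retE P A (fun n => (n : ℝ≥0∞) ^ ℓ) x) + 1,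
      by positivity, by finiteness, max (⨆ x ∈ A, retL P A x) 2⁻¹, by simp,
      max_lt h1 (by simp), fun i => if i ≤ ℓ then driftU P A (ℓ - i) else 0,
      fun i => ?_, fun x => by simp, ?_, fun i hi x hx => ?_, fun i hi x hx => ?_,
      fun x hx => ?_, fun x hx => ?_⟩
    · dsimp only
      split_ifs
      · exact driftU_measurable hA.1 _
      · exact measurable_zero
    · obtain ⟨x, hx⟩ := hA.nonempty
      exact ⟨x, fun i hi => by simp [hi, driftU, hx]⟩
    · simp only [hi, if_true, driftU, hx]
      exact_mod_cast Nat.factorial_pos _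
    · simp only [hi, if_true]
      refine le_trans ?_ (driftU_drift hA.1 (ℓ - i) hx)
      gcongr
      split_ifs
      · rw [Nat.sub_sub]
      · simp
    · simp only [zero_le, if_true, Nat.sub_zero, act_driftU hA.1]
      refine le_add_right ?_
      gcongr
      exact hM x hx
    · simp only [le_refl, if_true, Nat.sub_self, act_driftU hA.1, Nat.factorial_zero,
        Nat.cast_one, one_mul, ← retL_eq_retE]
      exact (hρ x hx).trans (le_max_left _ _)
  tfae_finish

end MarkovTransience
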